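/- (Passivity of the port-Hamiltonian backlash inductor.) For all t₀ ≤ t₁, H_bf(φ(t₁)) − H_bf(φ(t₀)) ≤ ∫_{t₀}^{t₁} I(t)·φ'(t) dt; that is, the backlash inductor is passive with respect to the port variables (V, I) with V = φ' and supply rate I·V. -/

import Mathlib

/-- The quadratic Hamiltonian of the backlash inductor. -/
noncomputable def Hbf (L φ : ℝ) : ℝ := φ ^ 2 / (2 * L)

/-!
The supplied power splits as `I φ' = φ φ' / L + (h / L) |φ'|`. The first term is the rate of change
of the Hamiltonian, the second is hysteresis loss. Integrating gives an energy balance, and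
passivity is the nonnegativity of the loss.
-/

open MeasureTheory

theorem integral_mul_deriv_self {f : ℝ → ℝ} {a b : ℝ} (hf : AbsolutelyContinuousOnInterval f a b) :
    ∫ t in a..b, f t * deriv f t = (f b ^ 2 - f a ^ 2) / 2 := by
  have by_parts := hf.integral_mul_deriv_eq_deriv_mul hf
  simp only [mul_comm (deriv f _)] at by_parts
  linarith

theorem integral_mul_deriv_div_eq_Hbf_sub {φ : ℝ → ℝ} {t₀ t₁ : ℝ} (L : ℝ)
    (hφ : AbsolutelyContinuousOnInterval φ t₀ t₁) :
    ∫ t in t₀..t₁, φ t * deriv φ t / L = Hbf L (φ t₁) - Hbf L (φ t₀) := by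
  rw [intervalIntegral.integral_div, integral_mul_deriv_self hφ, Hbf, Hbf]
  ring

theorem current_mul_voltage_eq {L h flux i σ v : ℝ} (hL : L ≠ 0) (hi : L * i = flux + h * σ)
    (hσ : σ * v = |v|) : i * v = flux * v / L + h / L * |v| := by
  rw [← hσ]
  field_simp
  linear_combination v * hi

section Passivity

variable {L h t₀ t₁ : ℝ} {φ s I : ℝ → ℝ}

theorem integral_current_mul_voltage_eq_Hbf_sub_add_dissipation (hL : L ≠ 0)
    (hφ : AbsolutelyContinuousOnInterval φ t₀ t₁)
    (hs : ∀ᵐ t, t ∈ Set.uIoc t₀ t₁ → s t * deriv φ t = |deriv φ t|)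
    (hI : ∀ᵐ t, t ∈ Set.uIoc t₀ t₁ → L * I t = φ t + h * s t) :
    ∫ t in t₀..t₁, I t * deriv φ t =
      Hbf L (φ t₁) - Hbf L (φ t₀) + h / L * ∫ t in t₀..t₁, |deriv φ t| := by
  have power_split : ∀ᵐ t, t ∈ Set.uIoc t₀ t₁ →
      I t * deriv φ t = φ t * deriv φ t / L + h / L * |deriv φ t| := by
    filter_upwards [hs, hI] with t hst hIt ht
    exact current_mul_voltage_eq hL (hIt ht) (hst ht)
  have stored_integrable : IntervalIntegrable (fun t ↦ φ t * deriv φ t / L) volume t₀ t₁ :=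
    (hφ.intervalIntegrable_deriv.continuousOn_mul hφ.continuousOn).div_const L
  have loss_integrable : IntervalIntegrable (fun t ↦ h / L * |deriv φ t|) volume t₀ t₁ :=
    hφ.intervalIntegrable_deriv.abs.const_mul (h / L)
  rw [intervalIntegral.integral_congr_ae power_split,
    intervalIntegral.integral_add stored_integrable loss_integrable,
    integral_mul_deriv_div_eq_Hbf_sub L hφ, intervalIntegral.integral_const_mul]

theorem stmt15_general (hL : L ≠ 0) (hhL : 0 ≤ h / L) (ht : t₀ ≤ t₁)
    (hφ : AbsolutelyContinuousOnInterval φ t₀ t₁)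
    (hs : ∀ᵐ t, t ∈ Set.uIoc t₀ t₁ → s t * deriv φ t = |deriv φ t|)
    (hI : ∀ᵐ t, t ∈ Set.uIoc t₀ t₁ → L * I t = φ t + h * s t) :
    Hbf L (φ t₁) - Hbf L (φ t₀) ≤ ∫ t in t₀..t₁, I t * deriv φ t := by
  have loss_nonneg : 0 ≤ h / L * ∫ t in t₀..t₁, |deriv φ t| :=
    mul_nonneg hhL (intervalIntegral.integral_nonneg ht fun t _ ↦ abs_nonneg (deriv φ t))
  rw [integral_current_mul_voltage_eq_Hbf_sub_add_dissipation hL hφ hs hI]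
  exact le_add_of_nonneg_right loss_nonneg

end Passivity

theorem stmt15 (L h : ℝ) (hL : 0 < L) (hh : 0 ≤ h)
    (φ s I : ℝ → ℝ) (hφ : ContDiff ℝ 1 φ)
    (hs1 : ∀ t, |s t| ≤ 1) (hs2 : ∀ t, s t * deriv φ t = |deriv φ t|)
    (hI : ∀ t, I t = φ t / L + (h / L) * s t) :
    ∀ t₀ t₁ : ℝ, t₀ ≤ t₁ →
      Hbf L (φ t₁) - Hbf L (φ t₀) ≤ ∫ t in t₀..t₁, I t * deriv φ t := fun _ _ ht ↦
  stmt15_general hL.ne' (div_nonneg hh hL.le) ht hφ.contDiffOn.absolutelyContinuousOnInterval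
    (.of_forall fun t _ ↦ hs2 t) (.of_forall fun t _ ↦ by rw [hI]; field_simp)
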